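/- Let F be a field of characteristic zero, n a natural number, and f : A → B a homomorphism of commutative F-algebras. Let TS^n f : TS^n_F(A) → TS^n_F(B) be the restriction of f^{⊗n} to symmetric tensors. Then the kernel of TS^n f is generated as an ideal of TS^n_F(A) by the elements e_1^n(a) with a ∈ ker f. -/

import Mathlib

/-!
Over a field, the kernel of `f^{⊗n}` is spanned by the elementary tensors with a factor in `ker f`,
because `f` is split on its image. A symmetric tensor in this kernel is, up to the scalar `n!`, its
own symmetrization, hence a combination of symmetrizations of such elementary tensors.

Symmetrization is linear over the symmetric tensors. Multiplying the symmetrization of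
`y_1 ⊗ ⋯ ⊗ y_n` by `e_1^n(a)` with `a ∈ ker f` therefore gives the sum over `j` of the
symmetrizations of `y_1 ⊗ ⋯ ⊗ y_j a ⊗ ⋯ ⊗ y_n`. All slots with `y_j = 1` contribute the same
element; in the other terms the factor `y_j a` again lies in `ker f` and has one fewer companion
different from `1`. Induction on the number of such companions puts all these symmetrizations in the
ideal generated by the elements `e_1^n(a)`.
-/

open scoped TensorProduct
open PiTensorProduct

universe u v w

namespace SymmetricProduct

variable (F : Type u) [Field F] [CharZero F] (A : Type v) [CommRing A] [Algebra F A] (n : ℕ)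

/-- The algebra homomorphism on the `n`-fold tensor power permuting factors by `σ`. -/
noncomputable def permHom (σ : Equiv.Perm (Fin n)) :
    (⨂[F] _ : Fin n, A) →ₐ[F] (⨂[F] _ : Fin n, A) :=
  PiTensorProduct.liftAlgHom (MultilinearMap.domDomCongr σ (PiTensorProduct.tprod F))
    (by simp [MultilinearMap.domDomCongr_apply]; rfl)
    (fun x y => by
      simp only [MultilinearMap.domDomCongr_apply]
      rw [tprod_mul_tprod]; rfl)

@[simp] lemma permHom_tprod (σ : Equiv.Perm (Fin n)) (x : Fin n → A) :
    permHom F A n σ (tprod F x) = tprod F (fun i => x (σ i)) := by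
  simp [permHom]

/-- `TS^n_F(A)`: the subalgebra of symmetric tensors in the `n`-fold tensor power of `A`. -/
noncomputable def TS : Subalgebra F (⨂[F] _ : Fin n, A) where
  carrier := {x | ∀ σ : Equiv.Perm (Fin n), permHom F A n σ x = x}
  mul_mem' := fun hx hy σ => by rw [_root_.map_mul, hx σ, hy σ]
  add_mem' := fun hx hy σ => by rw [_root_.map_add, hx σ, hy σ]
  one_mem' := fun σ => map_one _
  algebraMap_mem' := fun r σ => AlgHom.commutes _ r

/-- `e_i^n(a)`: the sum over `i`-element subsets `S` of `Fin n` of the elementary tensors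
having `a` in the slots of `S` and `1` elsewhere. -/
noncomputable def esym (i : ℕ) (a : A) : ⨂[F] _ : Fin n, A :=
  ∑ S ∈ Finset.powersetCard i (Finset.univ : Finset (Fin n)),
    tprod F (fun j => if j ∈ S then a else 1)

lemma esym_mem (i : ℕ) (a : A) : esym F A n i a ∈ TS F A n := by
  intro σ
  rw [esym, map_sum]
  simp only [permHom_tprod]
  refine Finset.sum_nbij' (fun S => S.map σ.symm.toEmbedding)
    (fun S => S.map σ.toEmbedding) ?_ ?_ ?_ ?_ ?_
  · intro S hS
    simp only [Finset.mem_powersetCard_univ, Finset.card_map] at hS ⊢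
    exact hS
  · intro S hS
    simp only [Finset.mem_powersetCard_univ, Finset.card_map] at hS ⊢
    exact hS
  · intro S hS
    ext j
    simp
  · intro S hS
    ext j
    simp
  · intro S hS
    congr 1
    funext j
    have hiff : (σ j ∈ S) ↔ (j ∈ Finset.map σ.symm.toEmbedding S) := by
      constructor
      · intro h
        exact Finset.mem_map.2 ⟨σ j, h, σ.symm_apply_apply j⟩
      · intro h
        obtain ⟨s, hs, rfl⟩ := Finset.mem_map.1 h
        simpa using hs
    simp only [hiff]

/-- `e_i^n(a)` as an element of `TS^n_F(A)`. -/
noncomputable def esymT (i : ℕ) (a : A) : TS F A n := ⟨esym F A n i a, esym_mem F A n i a⟩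

lemma tprod_const_mem (a : A) : (tprod F (fun _ : Fin n => a)) ∈ TS F A n := fun σ => by
  simp

/-- `a^{⊗ n}` as an element of `TS^n_F(A)`. -/
noncomputable def tpow (a : A) : TS F A n := ⟨tprod F (fun _ : Fin n => a), tprod_const_mem F A n a⟩


/-- The `n`-fold tensor power `f^{⊗n}` of an algebra homomorphism `f : A → B`. -/
noncomputable def mapPow {B : Type v} [CommRing B] [Algebra F B] (f : A →ₐ[F] B) :
    (⨂[F] _ : Fin n, A) →ₐ[F] (⨂[F] _ : Fin n, B) :=
  PiTensorProduct.liftAlgHom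
    ((PiTensorProduct.tprod F).compLinearMap (fun _ : Fin n => f.toLinearMap))
    (by
      simp only [MultilinearMap.compLinearMap_apply, AlgHom.toLinearMap_apply, Pi.one_apply,
        _root_.map_one]
      rfl)
    (fun x y => by
      simp only [MultilinearMap.compLinearMap_apply, AlgHom.toLinearMap_apply]
      rw [tprod_mul_tprod]
      congr 1
      funext i
      simp)

@[simp] lemma mapPow_tprod {B : Type v} [CommRing B] [Algebra F B] (f : A →ₐ[F] B)
    (x : Fin n → A) :
    mapPow F A n f (tprod F x) = tprod F (fun i => f (x i)) := by
  simp [mapPow]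

lemma permHom_mapPow {B : Type v} [CommRing B] [Algebra F B] (σ : Equiv.Perm (Fin n))
    (f : A →ₐ[F] B) (x : ⨂[F] _ : Fin n, A) :
    permHom F B n σ (mapPow F A n f x) = mapPow F A n f (permHom F A n σ x) := by
  have h : (permHom F B n σ).comp (mapPow F A n f)
      = (mapPow F A n f).comp (permHom F A n σ) := by
    ext i a
    simp [PiTensorProduct.singleAlgHom_apply]
  exact DFunLike.congr_fun h x

/-- `TS^n f` : the restriction of `f^{⊗n}` to symmetric tensors. -/
noncomputable def TSmap {B : Type v} [CommRing B] [Algebra F B] (f : A →ₐ[F] B) :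
    TS F A n →ₐ[F] TS F B n :=
  AlgHom.codRestrict ((mapPow F A n f).comp (TS F A n).val) (TS F B n)
    (fun x σ => by
      simp only [AlgHom.comp_apply, Subalgebra.coe_val]
      rw [permHom_mapPow, x.2 σ])

lemma multilinearMap_sub_mem_span {R ι N : Type*} {M : ι → Type*} [Semiring R] [Finite ι]
    [∀ i, AddCommGroup (M i)] [∀ i, Module R (M i)] [AddCommGroup N] [Module R N]
    (φ : MultilinearMap R M N) (v w : ∀ i, M i) :
    φ v - φ w ∈ Submodule.span R (φ '' {u | ∃ i, u i = v i - w i}) := by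
  classical
  have := Fintype.ofFinite ι
  have expansion : φ v = ∑ s : Finset ι, φ (s.piecewise (v - w) w) := by
    rw [← φ.map_add_univ, sub_add_cancel]
  rw [expansion, ← Finset.add_sum_erase _ _ (Finset.mem_univ ∅), Finset.piecewise_empty,
    add_sub_cancel_left]
  refine Submodule.sum_mem _ fun s hs => Submodule.subset_span ⟨_, ?_, rfl⟩
  obtain ⟨i, hi⟩ := Finset.nonempty_iff_ne_empty.2 (Finset.ne_of_mem_erase hs)
  exact ⟨i, s.piecewise_eq_of_mem _ _ hi⟩

lemma ker_piTensorProduct_map_eq_span_tprod {R ι : Type*} {M M' : ι → Type*} [CommRing R]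
    [Finite ι] [∀ i, AddCommGroup (M i)] [∀ i, Module R (M i)] [∀ i, AddCommGroup (M' i)]
    [∀ i, Module R (M' i)] (f : ∀ i, M i →ₗ[R] M' i) (g : ∀ i, M' i →ₗ[R] M i)
    (hg : ∀ i, f i ∘ₗ g i ∘ₗ f i = f i) :
    LinearMap.ker (PiTensorProduct.map f) =
      Submodule.span R (PiTensorProduct.tprod R '' {v | ∃ i, f i (v i) = 0}) := by
  set S := Submodule.span R (PiTensorProduct.tprod R '' {v | ∃ i, f i (v i) = 0})
  refine le_antisymm (fun x hx => ?_) (Submodule.span_le.2 ?_)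
  · have sub_mem (y) : y - PiTensorProduct.map g (PiTensorProduct.map f y) ∈ S := by
      induction y using PiTensorProduct.induction_on with
      | smul_tprod r v =>
        simp only [map_smul, PiTensorProduct.map_tprod, ← smul_sub]
        refine S.smul_mem r (Submodule.span_mono (Set.image_mono ?_)
          (multilinearMap_sub_mem_span (PiTensorProduct.tprod R) v fun i => g i (f i (v i))))
        rintro u ⟨i, hi⟩
        refine ⟨i, ?_⟩
        rw [hi, map_sub, sub_eq_zero]
        exact (LinearMap.congr_fun (hg i) (v i)).symm
      | add y z hy hz =>
        simp only [map_add, add_sub_add_comm]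
        exact S.add_mem hy hz
    simpa [LinearMap.mem_ker.1 hx] using sub_mem x
  · rintro _ ⟨v, ⟨i, hi⟩, rfl⟩
    exact (PiTensorProduct.map_tprod f v).trans ((PiTensorProduct.tprod R).map_coord_zero i hi)

lemma exists_linearMap_comp_comp_eq_self {K V W : Type*} [DivisionRing K] [AddCommGroup V]
    [Module K V] [AddCommGroup W] [Module K W] (f : V →ₗ[K] W) :
    ∃ g : W →ₗ[K] V, f ∘ₗ g ∘ₗ f = f := by
  obtain ⟨s, hs⟩ := f.rangeRestrict.exists_rightInverse_of_surjective f.range_rangeRestrict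
  obtain ⟨g, hg⟩ := s.exists_extend
  refine ⟨g, ?_⟩
  calc f ∘ₗ g ∘ₗ f = f ∘ₗ (g ∘ₗ f.range.subtype) ∘ₗ f.rangeRestrict := rfl
    _ = f.range.subtype ∘ₗ (f.rangeRestrict ∘ₗ s) ∘ₗ f.rangeRestrict := by rw [hg]; rfl
    _ = f := by rw [hs]; rfl

lemma tprod_mul_singleAlgHom {R ι : Type*} [CommSemiring R] [DecidableEq ι] {A : ι → Type*}
    [∀ i, Semiring (A i)] [∀ i, Algebra R (A i)] (x : ∀ i, A i) (i : ι) (a : A i) :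
    tprod R x * singleAlgHom i a = tprod R (Function.update x i (x i * a)) := by
  rw [singleAlgHom_apply, tprod_mul_tprod, MonoidHom.mulSingle_apply, Pi.mulSingle,
    ← Function.update_eq_self i x, ← Function.update_mul]
  simp

lemma algHom_ker_codRestrict {R S T : Type*} [CommSemiring R] [Semiring S] [Algebra R S]
    [Semiring T] [Algebra R T] (f : S →ₐ[R] T) (U : Subalgebra R T) (hf : ∀ x, f x ∈ U) :
    RingHom.ker (f.codRestrict U hf) = RingHom.ker f :=
  Ideal.ext fun _ => Subtype.ext_iff

section Symmetrization

open scoped Finset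

omit [CharZero F]

variable {F A n}

lemma permHom_apply_tprod (σ : Equiv.Perm (Fin n)) (x : Fin n → A) :
    permHom F A n σ (tprod F x) = tprod F (x ∘ σ) := by
  simp [permHom, Function.comp_def]

lemma permHom_permHom (σ τ : Equiv.Perm (Fin n)) (x : ⨂[F] _ : Fin n, A) :
    permHom F A n τ (permHom F A n σ x) = permHom F A n (σ * τ) x := by
  have h : (permHom F A n τ).comp (permHom F A n σ) = permHom F A n (σ * τ) :=
    AlgHom.toLinearMap_injective <| PiTensorProduct.ext <| MultilinearMap.ext fun x => by
      simp [permHom_apply_tprod, Function.comp_assoc]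
  exact DFunLike.congr_fun h x

/-- Symmetrization of tensors, the sum over all `σ ∈ S_n` of the tensor permuted by `σ`. It is not
divided by `n!`, so it makes sense in every characteristic and multiplies symmetric tensors by `n!`.
Linearity over `TS^n_F(A)` makes it compatible with multiplication by `e_1^n(a)`. -/
noncomputable def symmetrization : (⨂[F] _ : Fin n, A) →ₗ[TS F A n] TS F A n where
  toFun x := ⟨∑ σ, permHom F A n σ x, fun τ => by
    simp only [map_sum, permHom_permHom]
    exact Equiv.sum_comp (Equiv.mulRight τ) fun σ => permHom F A n σ x⟩
  map_add' x y := Subtype.ext <| by simp [Finset.sum_add_distrib]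
  map_smul' e x := Subtype.ext <| by
    simp [Subalgebra.smul_def, Finset.mul_sum, e.2 _]

lemma coe_symmetrization (x : ⨂[F] _ : Fin n, A) :
    (symmetrization x : ⨂[F] _ : Fin n, A) = ∑ σ, permHom F A n σ x := rfl

lemma symmetrization_tprod_comp (τ : Equiv.Perm (Fin n)) (x : Fin n → A) :
    symmetrization (tprod F (x ∘ τ)) = symmetrization (tprod F x) := by
  ext
  simp only [coe_symmetrization, permHom_apply_tprod]
  exact Equiv.sum_comp (Equiv.mulLeft τ) fun σ => tprod F (x ∘ σ)

lemma symmetrization_coe (x : TS F A n) :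
    symmetrization (x : ⨂[F] _ : Fin n, A) = (n.factorial : F) • x := by
  ext
  rw [coe_symmetrization, Finset.sum_congr rfl fun σ _ => x.2 σ]
  simp [Fintype.card_perm, Nat.cast_smul_eq_nsmul]

lemma esym_one (a : A) : esym F A n 1 a = ∑ j : Fin n, singleAlgHom j a := by
  rw [esym, Finset.powersetCard_one, Finset.sum_map]
  refine Finset.sum_congr rfl fun j _ => congrArg (PiTensorProduct.tprod F) (funext fun i => ?_)
  simp [Pi.mulSingle_apply]

lemma permHom_singleAlgHom (σ : Equiv.Perm (Fin n)) (j : Fin n) (a : A) :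
    permHom F A n σ (singleAlgHom j a) = singleAlgHom (σ.symm j) a := by
  rw [singleAlgHom_apply, singleAlgHom_apply, permHom_apply_tprod]
  congr 1
  ext i
  simp [Pi.mulSingle_apply, Equiv.eq_symm_apply]

variable (F n) in
/-- `e_1^n(a)` as an element of `TS^n_F(A)`, for a field `F` of any characteristic; it states the
kernel theorem when `n!` is merely nonzero in `F`. -/
noncomputable def esymOne (a : A) : TS F A n :=
  ⟨esym F A n 1 a, fun σ => by
    simp only [esym_one, map_sum, permHom_singleAlgHom]
    exact Equiv.sum_comp σ.symm fun j => singleAlgHom j a⟩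

lemma coe_esymOne (a : A) :
    (esymOne F n a : ⨂[F] _ : Fin n, A) = ∑ j : Fin n, singleAlgHom j a :=
  esym_one (n := n) a

lemma esymOne_mul_symmetrization_tprod (a : A) (y : Fin n → A) :
    esymOne F n a * symmetrization (tprod F y) =
      ∑ j, symmetrization (tprod F (Function.update y j (y j * a))) := by
  rw [← smul_eq_mul, ← map_smul, Subalgebra.smul_def, smul_eq_mul, mul_comm, coe_esymOne,
    Finset.mul_sum, map_sum]
  simp only [tprod_mul_singleAlgHom]

lemma symmetrization_tprod_update_eq {y : Fin n → A} {i j : Fin n} (hij : y i = y j) (a : A) :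
    symmetrization (tprod F (Function.update y i a)) =
      symmetrization (tprod F (Function.update y j a)) := by
  rw [← symmetrization_tprod_comp (Equiv.swap i j)]
  congr 2
  ext l
  grind [Function.update_apply]

open Classical in
lemma esymOne_mul_symmetrization_tprod_of_eq_one (a : A) {y : Fin n → A} {i : Fin n}
    (hi : y i = 1) :
    esymOne F n a * symmetrization (tprod F y) =
      (#{j | y j = 1} : F) • symmetrization (tprod F (Function.update y i a)) +
        ∑ j with y j ≠ 1, symmetrization (tprod F (Function.update y j (y j * a))) := by
  have eq_of_eq_one (j : Fin n) (hj : j ∈ ({j | y j = 1} : Finset (Fin n))) :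
      symmetrization (tprod F (Function.update y j (y j * a))) =
        symmetrization (tprod F (Function.update y i a)) := by
    have hj : y j = 1 := by simpa using hj
    rw [hj, one_mul, symmetrization_tprod_update_eq (hj.trans hi.symm)]
  rw [esymOne_mul_symmetrization_tprod, ← Finset.sum_filter_add_sum_filter_not _ (y · = 1),
    Finset.sum_congr rfl eq_of_eq_one, Finset.sum_const, Nat.cast_smul_eq_nsmul]

lemma symmetrization_tprod_update_mem (hn : (n.factorial : F) ≠ 0) {J : Ideal A}
    {I : Ideal (TS F A n)} (hI : ∀ a ∈ J, esymOne F n a ∈ I) {y : Fin n → A} {i : Fin n}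
    (hi : y i = 1) {a : A} (ha : a ∈ J) :
    symmetrization (tprod F (Function.update y i a)) ∈ I := by
  classical
  induction hk : #{j | y j ≠ 1} using Nat.strong_induction_on generalizing y i a with
  | _ k ih =>
  have others_mem : ∑ j with y j ≠ 1,
      symmetrization (tprod F (Function.update y j (y j * a))) ∈ I := by
    refine I.sum_mem fun j hj => ?_
    have fewer : #{l | Function.update y j 1 l ≠ 1} < k := by
      rw [← hk]
      refine Finset.card_lt_card (Finset.ssubset_iff_of_subset ?_ |>.2 ⟨j, hj, by simp⟩)
      intro l
      grind [Function.update_apply]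
    simpa using ih _ fewer (Function.update_self j 1 y) (J.mul_mem_left (y j) ha) rfl
  have card_ne_zero : (#{j | y j = 1} : F) ≠ 0 := by
    have card_pos : 0 < #{j | y j = 1} := Finset.card_pos.2 ⟨i, by simpa using hi⟩
    have card_le : #{j | y j = 1} ≤ n := by
      simpa using Finset.card_filter_le Finset.univ (y · = 1)
    exact ne_zero_of_dvd_ne_zero hn (Nat.cast_dvd_cast (Nat.dvd_factorial card_pos card_le))
  have product_mem := I.mul_mem_right (symmetrization (tprod F y)) (hI a ha)
  rw [esymOne_mul_symmetrization_tprod_of_eq_one a hi, I.add_mem_iff_left others_mem]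
    at product_mem
  exact (Submodule.smul_mem_iff I card_ne_zero).1 product_mem

lemma symmetrization_tprod_mem (hn : (n.factorial : F) ≠ 0) {J : Ideal A}
    {I : Ideal (TS F A n)} (hI : ∀ a ∈ J, esymOne F n a ∈ I) {x : Fin n → A} {i : Fin n}
    (hi : x i ∈ J) : symmetrization (tprod F x) ∈ I := by
  simpa using symmetrization_tprod_update_mem hn hI (Function.update_self i 1 x) hi

variable {B : Type v} [CommRing B] [Algebra F B] (f : A →ₐ[F] B)

lemma mapPow_toLinearMap :
    (mapPow F A n f).toLinearMap = PiTensorProduct.map fun _ => f.toLinearMap := by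
  ext x
  simp [mapPow]

lemma ker_mapPow_eq_span_tprod :
    LinearMap.ker (mapPow F A n f).toLinearMap =
      Submodule.span F (PiTensorProduct.tprod F '' {x | ∃ i, f (x i) = 0}) := by
  obtain ⟨g, hg⟩ := exists_linearMap_comp_comp_eq_self f.toLinearMap
  rw [mapPow_toLinearMap]
  exact ker_piTensorProduct_map_eq_span_tprod _ (fun _ => g) fun _ => hg

lemma symmetrization_mem_of_mapPow_eq_zero (hn : (n.factorial : F) ≠ 0) {I : Ideal (TS F A n)}
    (hI : ∀ a ∈ RingHom.ker f, esymOne F n a ∈ I) {x : ⨂[F] _ : Fin n, A}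
    (hx : mapPow F A n f x = 0) : symmetrization x ∈ I := by
  have ker_le : LinearMap.ker (mapPow F A n f).toLinearMap ≤
      (I.restrictScalars F).comap (symmetrization.restrictScalars F) := by
    rw [ker_mapPow_eq_span_tprod, Submodule.span_le]
    rintro _ ⟨x, ⟨i, hi⟩, rfl⟩
    exact symmetrization_tprod_mem hn hI hi
  exact ker_le hx

lemma mapPow_singleAlgHom (j : Fin n) (a : A) :
    mapPow F A n f (singleAlgHom j a) = singleAlgHom j (f a) := by
  rw [singleAlgHom_apply, singleAlgHom_apply, ← AlgHom.toLinearMap_apply, mapPow_toLinearMap,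
    PiTensorProduct.map_tprod]
  exact congrArg _ (funext <| Pi.apply_mulSingle (fun _ => f) (fun _ => map_one f) j a)

lemma mapPow_esymOne (a : A) : mapPow F A n f (esymOne F n a) = esymOne F n (f a) := by
  simp only [coe_esymOne, map_sum, mapPow_singleAlgHom]

theorem ker_TSmap_eq_span_esym_one_general (hn : (n.factorial : F) ≠ 0) :
    RingHom.ker ((mapPow F A n f).comp (TS F A n).val) =
      Ideal.span {x : TS F A n | ∃ a : A, f a = 0 ∧ x = esymOne F n a} := by
  refine le_antisymm (fun x hx => ?_) (Ideal.span_le.2 ?_)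
  · rw [← Submodule.smul_mem_iff _ hn, ← symmetrization_coe]
    refine symmetrization_mem_of_mapPow_eq_zero f hn (fun a ha => ?_) hx
    exact Ideal.subset_span ⟨a, ha, rfl⟩
  · rintro _ ⟨a, ha, rfl⟩
    change mapPow F A n f (esymOne F n a) = 0
    rw [mapPow_esymOne, ha, coe_esymOne]
    simp only [map_zero, Finset.sum_const_zero]

end Symmetrization

/-- **Kernel of `TS^n f` in characteristic zero.** For a homomorphism `f : A → B` of
commutative algebras over a field `F` of characteristic zero, the kernel of
`TS^n f : TS^n_F(A) → TS^n_F(B)` (the restriction of `f^{⊗n}` to symmetric tensors) is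
generated as an ideal by the elements `e_1^n(a)` with `a ∈ ker f`. -/
theorem ker_TSmap_eq_span_esym_one (B : Type v) [CommRing B] [Algebra F B] (f : A →ₐ[F] B) :
    RingHom.ker (TSmap F A n (B := B) f) =
      Ideal.span {x : TS F A n | ∃ a : A, f a = 0 ∧ x = esymT F A n 1 a} :=
  (algHom_ker_codRestrict _ _ _).trans <|
    ker_TSmap_eq_span_esym_one_general f (Nat.cast_ne_zero.2 n.factorial_ne_zero)

end SymmetricProduct
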